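/- arXiv:1001.1271 — 4 statements merged into one kernel-verified Lean document; each statement's English description precedes it below -/
import Mathlib

section
/- Let α > 1, let V ⊆ ℂ be an open connected set containing the interval [-1,1], and let φ, φ̃ : V → ℂ be univalent maps with φ(-1) = φ̃(-1) = -1 and φ(1) = φ̃(1) = 1. Let t, t̃ ∈ (0,1]. If φ(q_t(x)) = φ̃(q_{t̃}(x)) for all x ∈ [-1,1], then t = t̃ and φ = φ̃ on V. -/
/-- The unimodal maps `q_t(x) = -2t|x|^α + 2t - 1` (real critical order `α`). -/
noncomputable def qmapR (α t x : ℝ) : ℝ := -2 * t * |x| ^ α + 2 * t - 1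

/-! Near `x = 1` put `s = 2 * (1 - |x| ^ α)`; the hypothesis becomes `φ (-1 + t s) = φ' (-1 + t' s)`
for small `s`. By symmetry let `t ≤ t'`. The homothety of ratio `t / t'` centred at `-1` maps
`[-1, 1]` into itself, so the identity theorem extends `φ (-1 + (t / t') (x + 1)) = φ' x` from the
germ at `-1` to `x = 1`, where `φ 1 = φ' 1` and the injectivity of `φ` force `t / t' = 1`. Then `φ`
and `φ'` have the same germ at `-1`, hence agree on the connected set `V`. -/

open Set Filter
open scoped Topology

section Rescaling

variable {E : Type*} [NormedAddCommGroup E] [NormedSpace ℝ E] {f g : ℝ → E} {p q : ℝ}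

lemma tendsto_add_mul_nhdsNE {a : ℝ} (ha : a ≠ 0) (p : ℝ) :
    Tendsto (fun s : ℝ => p + a * s) (𝓝[≠] 0) (𝓝[≠] p) := by
  have hderiv : HasDerivAt (fun s : ℝ => p + a * s) a 0 := by
    simpa only [mul_one] using ((hasDerivAt_id' (0 : ℝ)).const_mul a).const_add p
  simpa only [mul_zero, add_zero] using hderiv.tendsto_nhdsNE ha

lemma add_mul_sub_mem_Icc {c x : ℝ} (hc : c ∈ Icc 0 1) (hx : x ∈ Icc p q) :
    p + c * (x - p) ∈ Icc p q := by
  have hle : c * (x - p) ≤ x - p := mul_le_of_le_one_left (sub_nonneg.2 hx.1) hc.2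
  have hnonneg : 0 ≤ c * (x - p) := mul_nonneg hc.1 (sub_nonneg.2 hx.1)
  exact ⟨by linarith, by linarith [hx.2]⟩

lemma eqOn_Icc_rescale_of_frequently_eq (hf : AnalyticOnNhd ℝ f (Icc p q))
    (hg : AnalyticOnNhd ℝ g (Icc p q)) {c : ℝ} (hc : c ∈ Icc 0 1)
    (h : ∃ᶠ x in 𝓝[≠] p, f (p + c * (x - p)) = g x) :
    EqOn (fun x => f (p + c * (x - p))) g (Icc p q) := by
  intro x hx
  have hfc : AnalyticOnNhd ℝ (fun x => f (p + c * (x - p))) (Icc p q) :=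
    hf.comp (fun _ _ => by fun_prop) fun _ hy => add_mul_sub_mem_Icc hc hy
  exact hfc.eqOn_of_preconnected_of_frequently_eq hg isPreconnected_Icc
    (left_mem_Icc.2 (hx.1.trans hx.2)) h hx

lemma eq_of_frequently_rescale_eq (hpq : p < q) (hf : AnalyticOnNhd ℝ f (Icc p q))
    (hg : AnalyticOnNhd ℝ g (Icc p q)) (hfi : InjOn f (Icc p q)) (hgi : InjOn g (Icc p q))
    (hq : f q = g q) {a b : ℝ} (ha : 0 < a) (hb : 0 < b)
    (h : ∃ᶠ s in 𝓝[≠] 0, f (p + a * s) = g (p + b * s)) : a = b := by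
  wlog hab : a ≤ b generalizing f g a b
  · exact (this hg hf hgi hfi hq.symm hb ha (h.mono fun _ => Eq.symm) (le_of_not_ge hab)).symm
  have hc : a / b ∈ Icc 0 1 := ⟨by positivity, (div_le_one hb).2 hab⟩
  have hq_mem : q ∈ Icc p q := right_mem_Icc.2 hpq.le
  have hgerm : ∃ᶠ x in 𝓝[≠] p, f (p + a / b * (x - p)) = g x := by
    refine (tendsto_add_mul_nhdsNE hb.ne' p).frequently (h.mono fun s hs => ?_)
    rwa [add_sub_cancel_left, ← mul_assoc, div_mul_cancel₀ a hb.ne']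
  have hfq : f (p + a / b * (q - p)) = f q :=
    (eqOn_Icc_rescale_of_frequently_eq hf hg hc hgerm hq_mem).trans hq.symm
  have hfix : p + a / b * (q - p) = q := hfi (add_mul_sub_mem_Icc hc hq_mem) hq_mem hfq
  have hratio : a / b = 1 :=
    mul_right_cancel₀ (sub_pos.2 hpq).ne' (by linarith)
  exact (div_eq_one_iff_eq hb.ne').1 hratio

end Rescaling

lemma tendsto_ofReal_nhdsNE (x : ℝ) : Tendsto ((↑) : ℝ → ℂ) (𝓝[≠] x) (𝓝[≠] (x : ℂ)) :=
  Complex.ofRealCLM.hasDerivAt.tendsto_nhdsNE (by simp)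

lemma analyticOnNhd_comp_ofReal {φ : ℂ → ℂ} {V : Set ℂ} (hφ : AnalyticOnNhd ℂ φ V) {I : Set ℝ}
    (hI : (fun x : ℝ => (x : ℂ)) '' I ⊆ V) : AnalyticOnNhd ℝ (fun x : ℝ => φ x) I := by
  intro x hx
  exact (hφ x (hI (mem_image_of_mem _ hx))).restrictScalars.comp (Complex.ofRealCLM.analyticAt x)

lemma qmapR_eq_neg_one_add_mul (α t x : ℝ) :
    qmapR α t x = -1 + t * (2 * (1 - |x| ^ α)) := by
  rw [qmapR]
  ring

lemma tendsto_two_mul_one_sub_abs_rpow {α : ℝ} (hα : α ≠ 0) :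
    Tendsto (fun x : ℝ => 2 * (1 - |x| ^ α)) (𝓝[≠] 1) (𝓝[≠] 0) := by
  have habs : HasDerivAt (fun x : ℝ => |x|) 1 1 := hasDerivAt_abs_pos one_pos
  have hderiv : HasDerivAt (fun x : ℝ => 2 * (1 - |x| ^ α)) (2 * -α) 1 := by
    simpa using ((habs.rpow_const (p := α) (by simp)).const_sub 1).const_mul 2
  simpa using hderiv.tendsto_nhdsNE (by simpa using hα)

lemma frequently_rescale_eq_of_frequently_qmapR_eq {X : Type*} {f g : ℝ → X} {α t t' : ℝ}
    (hα : α ≠ 0) (h : ∃ᶠ x in 𝓝[≠] 1, f (qmapR α t x) = g (qmapR α t' x)) :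
    ∃ᶠ s in 𝓝[≠] 0, f (-1 + t * s) = g (-1 + t' * s) := by
  simp only [qmapR_eq_neg_one_add_mul] at h
  exact (tendsto_two_mul_one_sub_abs_rpow hα).frequently h

lemma frequently_nhdsNE_of_forall_mem_Icc {P : ℝ → Prop} {a b : ℝ} (hab : a < b)
    (h : ∀ x ∈ Icc a b, P x) : ∃ᶠ x in 𝓝[≠] b, P x := by
  have hleft : ∀ᶠ x in 𝓝[<] b, P x := mem_of_superset (Icc_mem_nhdsLT hab) h
  exact hleft.frequently.filter_mono (nhdsLT_le_nhdsNE b)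

theorem stmt0_general {α : ℝ} (hα : α ≠ 0) {V : Set ℂ} (hVo : IsOpen V) (hVc : IsPreconnected V)
    (hseg : (fun x : ℝ => (x : ℂ)) '' Icc (-1 : ℝ) 1 ⊆ V) {φ φ' : ℂ → ℂ}
    (hφd : DifferentiableOn ℂ φ V) (hφi : InjOn φ ((fun x : ℝ => (x : ℂ)) '' Icc (-1 : ℝ) 1))
    (hφ'd : DifferentiableOn ℂ φ' V) (hφ'i : InjOn φ' ((fun x : ℝ => (x : ℂ)) '' Icc (-1 : ℝ) 1))
    (hone : φ 1 = φ' 1) {t t' : ℝ} (ht : 0 < t) (ht' : 0 < t')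
    (heq : ∃ᶠ x in 𝓝[≠] (1 : ℝ), φ (qmapR α t x : ℝ) = φ' (qmapR α t' x : ℝ)) :
    t = t' ∧ EqOn φ φ' V := by
  have hφ := hφd.analyticOnNhd hVo
  have hφ' := hφ'd.analyticOnNhd hVo
  have hscale : ∃ᶠ s : ℝ in 𝓝[≠] 0, φ (-1 + t * s : ℝ) = φ' (-1 + t' * s : ℝ) :=
    frequently_rescale_eq_of_frequently_qmapR_eq
      (f := fun x : ℝ => φ x) (g := fun x : ℝ => φ' x) hα heq
  obtain rfl : t = t' := eq_of_frequently_rescale_eq (by norm_num)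
    (analyticOnNhd_comp_ofReal hφ hseg) (analyticOnNhd_comp_ofReal hφ' hseg)
    (hφi.comp Complex.ofReal_injective.injOn (mapsTo_image _ _))
    (hφ'i.comp Complex.ofReal_injective.injOn (mapsTo_image _ _))
    (by simpa using hone) ht ht' hscale
  have hgerm : ∃ᶠ z in 𝓝[≠] ((-1 : ℝ) : ℂ), φ z = φ' z :=
    ((tendsto_ofReal_nhdsNE (-1)).comp (tendsto_add_mul_nhdsNE ht.ne' (-1))).frequently hscale
  have hbase : ((-1 : ℝ) : ℂ) ∈ V := hseg (mem_image_of_mem _ (by norm_num))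
  exact ⟨rfl, hφ.eqOn_of_preconnected_of_frequently_eq hφ' hVc hbase hgerm⟩

/-- **Injectivity of the composition transformation `L(φ,t) = φ ∘ q_t`.**
If `φ ∘ q_t = φ̃ ∘ q_{t̃}` on `[-1,1]`, where `φ, φ̃` are univalent on an open connected
set `V ⊇ [-1,1]` fixing `±1` and `t, t̃ ∈ (0,1]`, then `t = t̃` and `φ = φ̃` on `V`. -/
theorem stmt0 (α : ℝ) (hα : 1 < α)
    (V : Set ℂ) (hVo : IsOpen V) (hVc : IsConnected V)
    (hseg : (fun x : ℝ => (x : ℂ)) '' Set.Icc (-1 : ℝ) 1 ⊆ V)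
    (φ φ' : ℂ → ℂ)
    (hφd : DifferentiableOn ℂ φ V) (hφi : Set.InjOn φ V)
    (hφ'd : DifferentiableOn ℂ φ' V) (hφ'i : Set.InjOn φ' V)
    (h1 : φ (-1) = -1) (h2 : φ 1 = 1) (h3 : φ' (-1) = -1) (h4 : φ' 1 = 1)
    (t t' : ℝ) (ht : t ∈ Set.Ioc (0 : ℝ) 1) (ht' : t' ∈ Set.Ioc (0 : ℝ) 1)
    (heq : ∀ x ∈ Set.Icc (-1 : ℝ) 1,
      φ ((qmapR α t x : ℝ) : ℂ) = φ' ((qmapR α t' x : ℝ) : ℂ)) :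
    t = t' ∧ Set.EqOn φ φ' V := by
  exact stmt0_general (by linarith) hVo hVc.isPreconnected hseg hφd (hφi.mono hseg) hφ'd
    (hφ'i.mono hseg) (h2.trans h4.symm) ht.1 ht'.1
    (frequently_nhdsNE_of_forall_mem_Icc (by norm_num) heq)
end

section
/- Fix an integer r ≥ 1. Let V ⊆ ℂ be an open connected set containing [-1,1], let φ : V → ℂ be univalent with φ(-1) = -1 and φ(1) = 1, and let t ∈ (0,1]. Let W ⊆ ℂ be an open connected set containing [-1,1] with q_t(W) ⊆ V. Suppose ω : V → ℂ is holomorphic with ω(-1) = ω(1) = 0 and v ∈ ℂ are such that ω(q_t(z)) + 2v · φ'(q_t(z)) · (1 - z^{2r}) = 0 for all z ∈ W. Then v = 0 and ω vanishes identically on V. -/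
/-!
Since `q_t(z) + 1 = 2t (1 - z^{2r})`, the hypothesis says that the holomorphic function
`g(y) = ω(y) + (v / t) φ'(y) (y + 1)` satisfies `g ∘ q_t = 0`. As `q_t(1) = -1` and
`q_t'(1) = -4rt ≠ 0`, the map `q_t` is open at `1`, so `g` vanishes near `-1` and hence, by the
identity theorem, on all of `V`. Evaluating at `y = 1` gives `(2v / t) φ'(1) = 0`, and `φ'(1) ≠ 0`
because `φ` is univalent. So `v = 0`, and then `ω = g = 0` on `V`.
-/

/-- The polynomial `q_t(z) = -2t z^{2r} + 2t - 1` for even critical order `2r`. -/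
noncomputable def qmapC (r : ℕ) (t z : ℂ) : ℂ := -2 * t * z ^ (2 * r) + 2 * t - 1

open Filter Topology Set

theorem not_eventually_nhds_eq_of_injOn {X Y : Type*} [TopologicalSpace X] {f : X → Y}
    {s : Set X} {a : X} [(𝓝[≠] a).NeBot] (hs : s ∈ 𝓝 a) (hf : InjOn f s) :
    ¬ ∀ᶠ x in 𝓝 a, f x = f a := by
  intro hconst
  have heq : ∀ᶠ x in 𝓝 a, x = a := by
    filter_upwards [hs, hconst] with x hx hfx using hf hx (mem_of_mem_nhds hs) hfx
  obtain ⟨x, hx, hxa⟩ :=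
    ((heq.filter_mono nhdsWithin_le_nhds).and (eventually_mem_nhdsWithin (s := {a}ᶜ))).exists
  exact hxa hx

theorem exists_analyticAt_pow_eq {E : Type*} [NormedAddCommGroup E] [NormedSpace ℂ E]
    {g : E → ℂ} {a : E} {n : ℕ} (hg : AnalyticAt ℂ g a) (hga : g a ≠ 0) (hn : n ≠ 0) :
    ∃ k : E → ℂ, AnalyticAt ℂ k a ∧ ∀ z, k z ^ n = g z := by
  -- Dividing by `g a` moves the values near `a` into the domain of the principal branch.
  refine ⟨fun z => g a ^ (n⁻¹ : ℂ) * (g z / g a) ^ (n⁻¹ : ℂ), ?_, fun z => ?_⟩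
  · have hslit : g a / g a ∈ Complex.slitPlane := by simp [div_self hga]
    exact analyticAt_const.mul ((hg.div analyticAt_const hga).cpow analyticAt_const hslit)
  · rw [mul_pow, Complex.cpow_nat_inv_pow _ hn, Complex.cpow_nat_inv_pow _ hn,
      mul_div_cancel₀ _ hga]

theorem exists_eventuallyEq_pow_of_analyticOrderAt_eq {f : ℂ → ℂ} {a : ℂ} {n : ℕ}
    (hf : AnalyticAt ℂ f a) (hord : analyticOrderAt f a = n) (hn : n ≠ 0) :
    ∃ h : ℂ → ℂ, AnalyticAt ℂ h a ∧ h a = 0 ∧ deriv h a ≠ 0 ∧ ∀ᶠ z in 𝓝 a, f z = h z ^ n := by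
  obtain ⟨g, hg, hga, hfg⟩ := hf.analyticOrderAt_eq_natCast.1 hord
  obtain ⟨k, hk, hkg⟩ := exists_analyticAt_pow_eq hg hga hn
  have hka : k a ≠ 0 := ne_zero_pow hn (hkg a ▸ hga)
  have hderiv : HasDerivAt (fun z => (z - a) * k z) (k a) a := by
    simpa using ((hasDerivAt_id' a).sub_const a).fun_mul hk.differentiableAt.hasDerivAt
  refine ⟨fun z => (z - a) * k z, by fun_prop, by simp, hderiv.deriv ▸ hka, ?_⟩
  filter_upwards [hfg] with z hz
  rw [hz, mul_pow, hkg, smul_eq_mul]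

theorem not_injOn_pow_of_nhds_zero_le_map {X : Type*} [TopologicalSpace X] {h : X → ℂ}
    {s : Set X} {a : X} {n : ℕ} (hs : s ∈ 𝓝 a) (hh : 𝓝 0 ≤ map h (𝓝 a)) (hn : 1 < n) :
    ¬ InjOn (fun x => h x ^ n) s := by
  intro hinj
  obtain ⟨ζ, hζ⟩ : ∃ ζ : ℂ, IsPrimitiveRoot ζ n :=
    ⟨_, Complex.isPrimitiveRoot_exp n (Nat.ne_zero_of_lt hn)⟩
  have himage : ∀ᶠ w in 𝓝 (0 : ℂ), w ∈ h '' s := hh (image_mem_map hs)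
  have himage_mul : ∀ᶠ w in 𝓝 (0 : ℂ), ζ * w ∈ h '' s :=
    (continuous_const_mul ζ).tendsto' 0 0 (mul_zero ζ) |>.eventually himage
  obtain ⟨w, ⟨⟨x, hx, hxw⟩, ⟨y, hy, hyw⟩⟩, hw⟩ :=
    (((himage.and himage_mul).filter_mono nhdsWithin_le_nhds).and
      (eventually_mem_nhdsWithin (s := {0}ᶜ))).exists
  have hyx : y = x := hinj hy hx <| by
    simp only [hxw, hyw, mul_pow, hζ.pow_eq_one, one_mul]
  have hζw : ζ * w = w := by rw [← hyw, hyx, hxw]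
  exact hζ.ne_one hn ((mul_eq_right₀ hw).1 hζw)

/-- At a critical point `f - f a` would be the `n`-th power, `n ≥ 2`, of a local homeomorphism `h`,
so `f` would agree at the `h`-preimages of `w` and `ζ w` for an `n`-th root of unity `ζ ≠ 1`. -/
theorem deriv_ne_zero_of_injOn {f : ℂ → ℂ} {s : Set ℂ} {a : ℂ} (hs : s ∈ 𝓝 a)
    (hf : DifferentiableOn ℂ f s) (hinj : InjOn f s) : deriv f a ≠ 0 := by
  intro hcrit
  have hfa : AnalyticAt ℂ f a := hf.analyticAt hs
  have hsub : AnalyticAt ℂ (fun z => f z - f a) a := hfa.fun_sub analyticAt_const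
  have hfinite : analyticOrderAt (fun z => f z - f a) a ≠ ⊤ := by
    simpa only [ne_eq, analyticOrderAt_eq_top, sub_eq_zero] using
      not_eventually_nhds_eq_of_injOn hs hinj
  obtain ⟨n, hn⟩ := ENat.ne_top_iff_exists.1 hfinite
  have hn_gt : 1 < n := by
    have hpos : analyticOrderAt (deriv f) a ≠ 0 := hfa.deriv.analyticOrderAt_ne_zero.2 hcrit
    have htwo : (1 : ℕ∞) + 1 ≤ n := by
      rw [hn, ← hfa.analyticOrderAt_deriv_add_one]
      gcongr
      exact Order.one_le_iff_ne_zero.2 hpos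
    exact_mod_cast htwo
  obtain ⟨h, hh, hha, hh', hpow⟩ :=
    exists_eventuallyEq_pow_of_analyticOrderAt_eq hsub hn.symm (Nat.ne_zero_of_lt hn_gt)
  have hmap : map h (𝓝 a) = 𝓝 0 := by rw [hh.hasStrictDerivAt.map_nhds_eq hh', hha]
  refine not_injOn_pow_of_nhds_zero_le_map (inter_mem hs hpow) hmap.ge hn_gt ?_
  rintro x ⟨hxs, hx⟩ y ⟨hys, hy⟩ hxy
  exact hinj hxs hys (sub_left_injective (hx.trans (hxy.trans hy.symm)))

theorem eqOn_zero_of_comp_eventually_eq_zero {𝕜 X E F : Type*} [NontriviallyNormedField 𝕜]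
    [TopologicalSpace X] [NormedAddCommGroup E] [NormedSpace 𝕜 E] [NormedAddCommGroup F]
    [NormedSpace 𝕜 F] {g : E → F} {V : Set E} {q : X → E} {a : X}
    (hg : AnalyticOnNhd 𝕜 g V) (hV : IsPreconnected V) (hqa : q a ∈ V)
    (hq : 𝓝 (q a) ≤ map q (𝓝 a)) (hgq : ∀ᶠ x in 𝓝 a, g (q x) = 0) : EqOn g 0 V :=
  hg.eqOn_zero_of_preconnected_of_eventuallyEq_zero hV hqa (hq hgq)

theorem qmapC_one (r : ℕ) (t : ℂ) : qmapC r t 1 = -1 := by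
  simp [qmapC]

theorem qmapC_add_one (r : ℕ) (t z : ℂ) : qmapC r t z + 1 = 2 * t * (1 - z ^ (2 * r)) := by
  simp only [qmapC]
  ring

theorem hasStrictDerivAt_qmapC (r : ℕ) (t z : ℂ) :
    HasStrictDerivAt (qmapC r t) (-2 * t * (2 * r * z ^ (2 * r - 1))) z := by
  have h := (((hasStrictDerivAt_pow (2 * r) z).const_mul (-2 * t)).add_const (2 * t)).sub_const 1
  rwa [Nat.cast_mul, Nat.cast_ofNat] at h

theorem map_qmapC_nhds {r : ℕ} {t z : ℂ} (hr : r ≠ 0) (ht : t ≠ 0) (hz : z ≠ 0) :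
    map (qmapC r t) (𝓝 z) = 𝓝 (qmapC r t z) :=
  (hasStrictDerivAt_qmapC r t z).map_nhds_eq <| by simp [hr, ht, hz]

theorem stmt1_general {r : ℕ} (hr : r ≠ 0) {V : Set ℂ} (hVo : IsOpen V) (hVc : IsPreconnected V)
    (hVneg : -1 ∈ V) (hVone : 1 ∈ V) {φ : ℂ → ℂ} (hφ : DifferentiableOn ℂ φ V)
    (hφ' : deriv φ 1 ≠ 0) {t : ℂ} (ht : t ≠ 0) {ω : ℂ → ℂ} (hω : DifferentiableOn ℂ ω V)
    (hω1 : ω 1 = 0) {v : ℂ}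
    (hker : ∀ᶠ z in 𝓝 1,
      ω (qmapC r t z) + 2 * v * deriv φ (qmapC r t z) * (1 - z ^ (2 * r)) = 0) :
    v = 0 ∧ ∀ z ∈ V, ω z = 0 := by
  have hg : AnalyticOnNhd ℂ (fun y => ω y + v / t * deriv φ y * (y + 1)) V := by
    intro y hy
    have hωy : AnalyticAt ℂ ω y := hω.analyticOnNhd hVo y hy
    have hφy : AnalyticAt ℂ (deriv φ) y := (hφ.analyticOnNhd hVo).deriv y hy
    fun_prop
  have hgq : ∀ᶠ z in 𝓝 1, ω (qmapC r t z) +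
      v / t * deriv φ (qmapC r t z) * (qmapC r t z + 1) = 0 := by
    filter_upwards [hker] with z hz
    rw [← hz, qmapC_add_one]
    field_simp
  have hzero : EqOn (fun y => ω y + v / t * deriv φ y * (y + 1)) 0 V :=
    eqOn_zero_of_comp_eventually_eq_zero hg hVc ((qmapC_one r t).symm ▸ hVneg)
      (map_qmapC_nhds hr ht one_ne_zero).ge hgq
  have hv : v = 0 := by
    have hone : v / t * deriv φ 1 * (1 + 1) = 0 := by simpa [hω1] using hzero hVone
    simpa [ht, hφ', one_add_one_eq_two] using hone
  exact ⟨hv, fun z hz => by simpa [hv] using hzero hz⟩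

/-- **Injectivity of the derivative `DL(φ,t)` of the composition transformation.**
If `ω ∘ q_t + 2v ⬝ (φ' ∘ q_t) ⬝ (1 - z^{2r}) = 0` on an open connected set `W ⊇ [-1,1]`
with `q_t(W) ⊆ V`, where `φ` is univalent on `V` fixing `±1`, `ω` is holomorphic on `V`
vanishing at `±1`, and `t ∈ (0,1]`, then `v = 0` and `ω ≡ 0` on `V`. -/
theorem stmt1 (r : ℕ) (hr : 1 ≤ r)
    (V : Set ℂ) (hVo : IsOpen V) (hVc : IsConnected V)
    (hsegV : (fun x : ℝ => (x : ℂ)) '' Set.Icc (-1 : ℝ) 1 ⊆ V)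
    (φ : ℂ → ℂ) (hφd : DifferentiableOn ℂ φ V) (hφi : Set.InjOn φ V)
    (hφ1 : φ (-1) = -1) (hφ2 : φ 1 = 1)
    (t : ℝ) (ht : t ∈ Set.Ioc (0 : ℝ) 1)
    (W : Set ℂ) (hWo : IsOpen W) (hWc : IsConnected W)
    (hsegW : (fun x : ℝ => (x : ℂ)) '' Set.Icc (-1 : ℝ) 1 ⊆ W)
    (hWV : (fun z => qmapC r (t : ℂ) z) '' W ⊆ V)
    (ω : ℂ → ℂ) (hωd : DifferentiableOn ℂ ω V) (hω1 : ω (-1) = 0) (hω2 : ω 1 = 0)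
    (v : ℂ)
    (heq : ∀ z ∈ W,
      ω (qmapC r (t : ℂ) z) + 2 * v * deriv φ (qmapC r (t : ℂ) z) * (1 - z ^ (2 * r)) = 0) :
    v = 0 ∧ ∀ z ∈ V, ω z = 0 := by
  have hV1 : (1 : ℂ) ∈ V := hsegV ⟨1, by simp, by simp⟩
  exact stmt1_general (Nat.one_le_iff_ne_zero.1 hr) hVo hVc.isPreconnected
    (hsegV ⟨-1, by simp, by simp⟩) hV1 hφd (deriv_ne_zero_of_injOn (hVo.mem_nhds hV1) hφd hφi)
    (Complex.ofReal_ne_zero.2 ht.1.ne') hωd hω2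
    (eventually_of_mem (hWo.mem_nhds (hsegW ⟨1, by simp, by simp⟩)) heq)
end

section
/- Fix an integer r ≥ 1. Let V ⊆ ℂ be an open connected set containing [-1,1], let φ : V → ℂ be univalent with φ(-1) = -1, φ(1) = 1 and φ'(1) ≠ 0, and let t ∈ (0,1]. Let W ⊆ ℂ be an open set containing [-1,1] with q_t(W) ⊆ V. Then for every polynomial ψ ∈ ℂ[y] with ψ(1) = 0, there exist a holomorphic map ω : V → ℂ with ω(-1) = ω(1) = 0 and a complex number v such that ω(q_t(z)) + 2v · φ'(q_t(z)) · (1 - z^{2r}) = ψ(z^{2r}) for all z ∈ W. -/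
/-- The inverse of the affine map `y ↦ -2ty + 2t - 1`: it recovers `y = z^{2r}` from `w = q_t(z)`,
for every `r`. Meaningful only for `t ≠ 0`; division by zero makes `powCoord 0` constantly `1`. -/
noncomputable def powCoord (t w : ℂ) : ℂ := 1 - (w + 1) / (2 * t)

theorem differentiable_powCoord (t : ℂ) : Differentiable ℂ (powCoord t) := by
  unfold powCoord
  fun_prop

theorem powCoord_neg_one (t : ℂ) : powCoord t (-1) = 1 := by
  simp [powCoord]

theorem one_sub_powCoord_one (t : ℂ) : 1 - powCoord t 1 = t⁻¹ := by
  rw [powCoord, sub_sub_cancel, one_add_one_eq_two, div_mul_cancel_left₀ two_ne_zero]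

theorem powCoord_qmapC (r : ℕ) {t : ℂ} (ht : t ≠ 0) (z : ℂ) :
    powCoord t (qmapC r t z) = z ^ (2 * r) := by
  unfold powCoord qmapC
  field_simp
  ring

theorem exists_differentiableOn_add_mul_eq {𝕜 E : Type*} [NontriviallyNormedField 𝕜]
    [NormedAddCommGroup E] [NormedSpace 𝕜 E] {s : Set E} {F G : E → 𝕜}
    (hF : DifferentiableOn 𝕜 F s) (hG : DifferentiableOn 𝕜 G s) {a b : E}
    (hFa : F a = 0) (hGa : G a = 0) (hGb : G b ≠ 0) :
    ∃ (ω : E → 𝕜) (c : 𝕜), DifferentiableOn 𝕜 ω s ∧ ω a = 0 ∧ ω b = 0 ∧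
      ∀ x, ω x + c * G x = F x :=
  ⟨fun x => F x - F b / G b * G x, F b / G b, hF.sub (hG.const_mul _), by simp [hFa, hGa],
    by simp [hGb], fun x => sub_add_cancel _ _⟩

theorem stmt2_general (r : ℕ) {V : Set ℂ} (hVo : IsOpen V) {φ : ℂ → ℂ}
    (hφ : DifferentiableOn ℂ φ V) (hφ' : deriv φ 1 ≠ 0) {t : ℂ} (ht : t ≠ 0) {f : ℂ → ℂ}
    (hf : DifferentiableOn ℂ f (powCoord t '' V)) (hf1 : f 1 = 0) :
    ∃ (ω : ℂ → ℂ) (v : ℂ),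
      DifferentiableOn ℂ ω V ∧ ω (-1) = 0 ∧ ω 1 = 0 ∧
      ∀ z, qmapC r t z ∈ V →
        ω (qmapC r t z) + 2 * v * deriv φ (qmapC r t z) * (1 - z ^ (2 * r)) = f (z ^ (2 * r)) := by
  let F w := f (powCoord t w)
  let G w := 2 * deriv φ w * (1 - powCoord t w)
  have hy : DifferentiableOn ℂ (powCoord t) V := (differentiable_powCoord t).differentiableOn
  have hF : DifferentiableOn ℂ F V := hf.comp hy (Set.mapsTo_image _ _)
  have hG : DifferentiableOn ℂ G V := ((hφ.deriv hVo).const_mul 2).mul (hy.const_sub 1)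
  have hF_neg_one : F (-1) = 0 := by simp only [F, powCoord_neg_one, hf1]
  have hG_neg_one : G (-1) = 0 := by simp only [G, powCoord_neg_one, sub_self, mul_zero]
  have hG_one : G 1 ≠ 0 := by
    simp only [G, one_sub_powCoord_one]
    exact mul_ne_zero (mul_ne_zero two_ne_zero hφ') (inv_ne_zero ht)
  obtain ⟨ω, v, hω, hω_neg_one, hω_one, h_eq⟩ :=
    exists_differentiableOn_add_mul_eq hF hG hF_neg_one hG_neg_one hG_one
  refine ⟨ω, v, hω, hω_neg_one, hω_one, fun z _ => ?_⟩
  have h_eq_z := h_eq (qmapC r t z)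
  simp only [F, G, powCoord_qmapC r ht] at h_eq_z
  rw [← h_eq_z]
  ring

/-- **Density of the image of `DL(φ,t)`.**
Every polynomial vector field of the form `z ↦ ψ(z^{2r})` with `ψ(1) = 0` is in the image of
`(ω, v) ↦ ω ∘ q_t + 2v ⬝ (φ' ∘ q_t) ⬝ (1 - z^{2r})`. -/
theorem stmt2 (r : ℕ) (hr : 1 ≤ r)
    (V : Set ℂ) (hVo : IsOpen V) (hVc : IsConnected V)
    (hsegV : (fun x : ℝ => (x : ℂ)) '' Set.Icc (-1 : ℝ) 1 ⊆ V)
    (φ : ℂ → ℂ) (hφd : DifferentiableOn ℂ φ V) (hφi : Set.InjOn φ V)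
    (hφ1 : φ (-1) = -1) (hφ2 : φ 1 = 1) (hφ' : deriv φ 1 ≠ 0)
    (t : ℝ) (ht : t ∈ Set.Ioc (0 : ℝ) 1)
    (W : Set ℂ) (hWo : IsOpen W)
    (hsegW : (fun x : ℝ => (x : ℂ)) '' Set.Icc (-1 : ℝ) 1 ⊆ W)
    (hWV : (fun z => qmapC r (t : ℂ) z) '' W ⊆ V)
    (ψ : Polynomial ℂ) (hψ : ψ.eval 1 = 0) :
    ∃ (ω : ℂ → ℂ) (v : ℂ),
      DifferentiableOn ℂ ω V ∧ ω (-1) = 0 ∧ ω 1 = 0 ∧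
      ∀ z ∈ W,
        ω (qmapC r (t : ℂ) z) + 2 * v * deriv φ (qmapC r (t : ℂ) z) * (1 - z ^ (2 * r))
          = ψ.eval (z ^ (2 * r)) := by
  have ht0 : (t : ℂ) ≠ 0 := Complex.ofReal_ne_zero.mpr ht.1.ne'
  obtain ⟨ω, v, hω, hω_neg_one, hω_one, h_eq⟩ :=
    stmt2_general r hVo hφd hφ' ht0 ψ.differentiable.differentiableOn hψ
  exact ⟨ω, v, hω, hω_neg_one, hω_one, fun z hz => h_eq z (hWV (Set.mem_image_of_mem _ hz))⟩
end

section
/- For all real numbers ε and ε_1 with 0 < ε < ε_1, there exists a constant C > 0 such that every injective holomorphic map g : D_{ε_1} → ℂ with g(-1) = -1 and g(1) = 1 satisfies sup_{z ∈ D_ε} |g(z) - z| ≤ C. -/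
/-- The interval `[-1,1]` viewed as a subset of `ℂ`. -/
def realSeg : Set ℂ := (fun x : ℝ => (x : ℂ)) '' Set.Icc (-1 : ℝ) 1

/-- The `a`-stadium: points at distance `< a` from `[-1,1]`. -/
def stadium (a : ℝ) : Set ℂ := {z : ℂ | Metric.infDist z realSeg < a}

/-!
An injective holomorphic map `g` omitting a value `w` on a simply connected open set is
`w + exp u` with `u` holomorphic. By injectivity `u` never takes two values differing by `2πi`, so
its image contains no disc of radius greater than `2π`. By Bloch's theorem the image of a disc of
radius `R` about `c` contains a disc of radius `R |u'(c)| / 48`, hence `R |u'(c)| ≤ 96π`.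
Integrating, `|g(z) - w| ≤ exp (96π |z - p| / δ) |g(p) - w|` for `z`, `p` in a convex set `V` such
that `g` omits `w` on the `δ`-neighbourhood of `V`.

Now let `g` fix `p` and `q`. It omits `g(q)` on a neighbourhood of the points of `V` closer to `p`
than to `q`, and omits `g(p)` on a neighbourhood of the other points, again by injectivity. Both
parts of `V` are convex, and on both the estimate applies with `|g(p) - g(q)| = |p - q|`.
-/

open Metric Set Complex Filter Topology

section Bloch

variable {u : ℂ → ℂ} {a c : ℂ} {r ρ R : ℝ}

lemma ball_subset_image_closedBall_of_norm_deriv_sub_le (hr : 0 < r)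
    (hu : ∀ z ∈ closedBall a r, DifferentiableAt ℂ u z)
    (hclose : ∀ z ∈ closedBall a r, ‖deriv u z - deriv u a‖ ≤ ‖deriv u a‖ / 2) :
    ball (u a) (r * ‖deriv u a‖ / 4) ⊆ u '' closedBall a r := by
  obtain ha | ha := eq_or_ne (deriv u a) 0
  · simp [ha]
  have hcenter : a ∈ closedBall a r := mem_closedBall_self hr.le
  have hlower : ∀ z ∈ sphere a r, r * ‖deriv u a‖ / 2 ≤ ‖u z - u a‖ := by
    intro z hz
    have hza : ‖z - a‖ = r := mem_sphere_iff_norm.1 hz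
    have hlin : ‖u z - u a - deriv u a * (z - a)‖ ≤ ‖deriv u a‖ / 2 * r := by
      calc ‖u z - u a - deriv u a * (z - a)‖
          = ‖(u z - deriv u a * z) - (u a - deriv u a * a)‖ := by congr 1; ring
        _ ≤ ‖deriv u a‖ / 2 * ‖z - a‖ :=
          (convex_closedBall a r).norm_image_sub_le_of_norm_hasDerivWithin_le
            (f := fun x => u x - deriv u a * x)
            (fun x hx => ((hu x hx).hasDerivAt.sub
              ((hasDerivAt_id x).const_mul (deriv u a))).hasDerivWithinAt)
            (by simpa using hclose) hcenter (sphere_subset_closedBall hz)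
        _ = ‖deriv u a‖ / 2 * r := by rw [hza]
    have htri := norm_sub_norm_le (deriv u a * (z - a)) (u z - u a)
    rw [norm_sub_rev (_ * _), norm_mul, hza] at htri
    linarith
  have hne : ∃ᶠ z in 𝓝 a, u z ≠ u a :=
    ((hu a hcenter).hasDerivAt.eventually_ne ha).frequently.filter_mono nhdsWithin_le_nhds
  have hdiff : DiffContOnCl ℂ u (ball a r) :=
    DifferentiableOn.diffContOnCl_ball (fun z hz => (hu z hz).differentiableWithinAt) subset_rfl
  have hradius : r * ‖deriv u a‖ / 4 = r * ‖deriv u a‖ / 2 / 2 := by ring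
  rw [hradius]
  exact hdiff.ball_subset_image_closedBall hr hlower hne

lemma ball_subset_image_ball_of_norm_deriv_le (hu : DifferentiableOn ℂ u (ball a ρ))
    (hbound : ∀ z ∈ ball a ρ, ‖deriv u z‖ ≤ 2 * ‖deriv u a‖) :
    ball (u a) (ρ * ‖deriv u a‖ / 24) ⊆ u '' ball a ρ := by
  obtain hρ | hρ := le_or_gt ρ 0
  · have : ρ * ‖deriv u a‖ / 24 ≤ 0 := by
      linarith [mul_nonpos_of_nonpos_of_nonneg hρ (norm_nonneg (deriv u a))]
    simp [ball_eq_empty.2 this]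
  have hsub : closedBall a (ρ / 6) ⊆ ball a ρ := closedBall_subset_ball (by linarith)
  have hmaps : MapsTo (deriv u) (ball a ρ) (closedBall (deriv u a) (3 * ‖deriv u a‖)) := by
    intro z hz
    rw [mem_closedBall, dist_eq_norm]
    linarith [hbound z hz, norm_sub_le (deriv u z) (deriv u a)]
  -- The Schwarz lemma for `u'` makes `u` nearly linear on the disc of radius `ρ / 6`.
  have hclose : ∀ z ∈ closedBall a (ρ / 6), ‖deriv u z - deriv u a‖ ≤ ‖deriv u a‖ / 2 := by
    intro z hz
    calc ‖deriv u z - deriv u a‖ = dist (deriv u z) (deriv u a) := (dist_eq_norm _ _).symm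
      _ ≤ 3 * ‖deriv u a‖ / ρ * dist z a :=
        dist_le_div_mul_dist_of_mapsTo_ball (hu.deriv isOpen_ball) hmaps (hsub hz)
      _ ≤ 3 * ‖deriv u a‖ / ρ * (ρ / 6) := by gcongr; exact hz
      _ = ‖deriv u a‖ / 2 := by field_simp; ring
  have hradius : ρ * ‖deriv u a‖ / 24 = ρ / 6 * ‖deriv u a‖ / 4 := by ring
  rw [hradius]
  exact (ball_subset_image_closedBall_of_norm_deriv_sub_le (by positivity)
    (fun z hz => hu.differentiableAt (isOpen_ball.mem_nhds (hsub hz))) hclose).trans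
      (image_mono hsub)

lemma bloch_exists_ball_subset_image (hR : 0 ≤ R) (hu : AnalyticOnNhd ℂ u (closedBall c R)) :
    ∃ a ∈ closedBall c R, ball (u a) (R * ‖deriv u c‖ / 48) ⊆ u '' closedBall c R := by
  have hc : c ∈ closedBall c R := mem_closedBall_self hR
  -- Maximality of `(R - |z - c|) |u'(z)|` at `a` gives `|u'| ≤ 2 |u'(a)|` halfway to the boundary.
  obtain ⟨a, ha, hmax⟩ : ∃ a ∈ closedBall c R, ∀ z ∈ closedBall c R,
      (R - dist z c) * ‖deriv u z‖ ≤ (R - dist a c) * ‖deriv u a‖ :=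
    (isCompact_closedBall c R).exists_isMaxOn ⟨c, hc⟩
      ((continuous_const.sub (continuous_id.dist continuous_const)).continuousOn.mul
        hu.deriv.continuousOn.norm)
  have hsub : ball a ((R - dist a c) / 2) ⊆ closedBall c R := by
    refine ball_subset_closedBall.trans (closedBall_subset_closedBall' ?_)
    linarith [mem_closedBall.1 ha]
  have hbound : ∀ z ∈ ball a ((R - dist a c) / 2), ‖deriv u z‖ ≤ 2 * ‖deriv u a‖ := by
    intro z hz
    have hpos : 0 < (R - dist a c) / 2 := pos_of_mem_ball hz
    have hdist : (R - dist a c) / 2 ≤ R - dist z c := by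
      linarith [dist_triangle z a c, mem_ball.1 hz]
    refine le_of_mul_le_mul_left ?_ hpos
    calc (R - dist a c) / 2 * ‖deriv u z‖ ≤ (R - dist z c) * ‖deriv u z‖ := by gcongr
      _ ≤ (R - dist a c) * ‖deriv u a‖ := hmax z (hsub hz)
      _ = (R - dist a c) / 2 * (2 * ‖deriv u a‖) := by ring
  have hradius : R * ‖deriv u c‖ / 48 ≤ (R - dist a c) / 2 * ‖deriv u a‖ / 24 := by
    have := hmax c hc
    rw [dist_self, sub_zero] at this
    linarith
  exact ⟨a, ha, (ball_subset_ball hradius).trans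
    ((ball_subset_image_ball_of_norm_deriv_le (hu.differentiableOn.mono hsub) hbound).trans
      (image_mono hsub))⟩

end Bloch

section OmittedValue

variable {f g u : ℂ → ℂ} {U V : Set ℂ} {c p q w z : ℂ} {r R δ : ℝ}

lemma le_two_pi_of_ball_subset_image_of_injOn_exp (hinj : InjOn (exp ∘ u) U) (hc : c ∈ U)
    (hball : ball (u c) r ⊆ u '' U) : r ≤ 2 * Real.pi := by
  by_contra! hr
  have hmem : u c + 2 * Real.pi * I ∈ ball (u c) r := by
    simpa [abs_of_pos Real.pi_pos] using hr
  obtain ⟨b, hb, hbc⟩ := hball hmem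
  have hexp : exp (u b) = exp (u c) := by rw [hbc, exp_add, exp_two_pi_mul_I, mul_one]
  rw [hinj hb hc hexp] at hbc
  exact two_pi_I_ne_zero (left_eq_add.1 hbc)

lemma mul_norm_deriv_le_of_injOn_exp (hu : DifferentiableOn ℂ u (ball c R))
    (hinj : InjOn (exp ∘ u) (ball c R)) : R * ‖deriv u c‖ ≤ 96 * Real.pi := by
  have hclosed : ∀ r, 0 ≤ r → r < R → r * ‖deriv u c‖ ≤ 96 * Real.pi := by
    intro r hr hrR
    have hsub : closedBall c r ⊆ ball c R := closedBall_subset_ball hrR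
    obtain ⟨a, ha, hball⟩ :=
      bloch_exists_ball_subset_image hr ((hu.analyticOnNhd isOpen_ball).mono hsub)
    linarith [le_two_pi_of_ball_subset_image_of_injOn_exp (hinj.mono hsub) ha hball]
  by_contra! hlt
  have hd : 0 < ‖deriv u c‖ := (norm_nonneg _).lt_of_ne fun h => by
    rw [← h, mul_zero] at hlt
    linarith [Real.pi_pos]
  obtain ⟨r, hr, hrR⟩ := exists_between ((div_lt_iff₀ hd).2 hlt)
  have hr0 : 0 ≤ r := (by positivity : 0 ≤ 96 * Real.pi / ‖deriv u c‖).trans hr.le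
  exact ((div_lt_iff₀ hd).1 hr).not_ge (hclosed r hr0 hrR)

lemma exists_differentiableOn_eqOn_exp_comp (hUs : IsSimplyConnected U) (hU : IsOpen U)
    (hf : DifferentiableOn ℂ f U) (h0 : 0 ∉ f '' U) :
    ∃ u : ℂ → ℂ, DifferentiableOn ℂ u U ∧ EqOn (exp ∘ u) f U := by
  obtain ⟨u, hcont, hexp⟩ := exists_continuousOn_eqOn_exp_comp hUs hU hf.continuousOn h0
  refine ⟨u, fun z hz => ?_, hexp⟩
  have hnhds := hU.mem_nhds hz
  exact (HasDerivAt.of_comp_left (hcont.continuousAt hnhds) (hasDerivAt_exp (u z))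
    (hf.differentiableAt hnhds).hasDerivAt (exp_ne_zero _)
    (hexp.eventuallyEq_of_mem hnhds)).differentiableAt.differentiableWithinAt

lemma dist_le_exp_mul_dist_of_omitted (hV : Convex ℝ V) (hδ : 0 < δ)
    (hg : DifferentiableOn ℂ g (thickening δ V)) (hinj : InjOn g (thickening δ V))
    (hw : w ∉ g '' thickening δ V) (hp : p ∈ V) (hz : z ∈ V) :
    dist (g z) w ≤ Real.exp (96 * Real.pi / δ * dist z p) * dist (g p) w := by
  have hsub : V ⊆ thickening δ V := self_subset_thickening hδ V
  have hball : ∀ x ∈ V, ball x δ ⊆ thickening δ V := fun x hx => ball_subset_thickening hx δ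
  have hsc : IsSimplyConnected (thickening δ V) :=
    have := (hV.thickening δ).contractibleSpace ⟨p, hsub hp⟩
    SimplyConnectedSpace.ofContractible _
  obtain ⟨u, hu, hexp⟩ := exists_differentiableOn_eqOn_exp_comp hsc isOpen_thickening
    (hg.sub_const w) (by simpa [sub_eq_zero] using hw)
  have hinj' : InjOn (exp ∘ u) (thickening δ V) :=
    (hexp.injOn_iff).2 fun x hx y hy hxy => hinj hx hy (sub_left_injective hxy)
  have hderiv : ∀ x ∈ V, ‖deriv u x‖ ≤ 96 * Real.pi / δ := fun x hx => by
    rw [le_div_iff₀' hδ]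
    exact mul_norm_deriv_le_of_injOn_exp (hu.mono (hball x hx)) (hinj'.mono (hball x hx))
  have hlog : ‖u z - u p‖ ≤ 96 * Real.pi / δ * dist z p := by
    rw [dist_eq_norm]
    exact hV.norm_image_sub_le_of_norm_deriv_le
      (fun x hx => hu.differentiableAt (isOpen_thickening.mem_nhds (hsub hx))) hderiv hp hz
  have hnorm : ∀ x ∈ V, dist (g x) w = Real.exp (u x).re := fun x hx => by
    rw [dist_eq_norm, ← norm_exp]
    exact congrArg norm (hexp (hsub hx)).symm
  rw [hnorm z hz, hnorm p hp, ← Real.exp_add, Real.exp_le_exp, ← sub_le_iff_le_add, ← sub_re]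
  exact (re_le_norm _).trans hlog

lemma convex_setOf_dist_le_dist {E : Type*} [NormedAddCommGroup E] [InnerProductSpace ℝ E]
    (p q : E) : Convex ℝ {z | dist z p ≤ dist z q} := by
  have hhalf : {z | dist z p ≤ dist z q} =
      {z | inner ℝ (q - p) z ≤ (‖q‖ ^ 2 - ‖p‖ ^ 2) / 2} := by
    ext z
    rw [mem_ofPred_eq, mem_ofPred_eq, dist_eq_norm, dist_eq_norm,
      ← sq_le_sq₀ (norm_nonneg _) (norm_nonneg _), norm_sub_sq_real, norm_sub_sq_real,
      inner_sub_left, real_inner_comm z q, real_inner_comm z p]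
    constructor <;> intro h <;> linarith
  rw [hhalf]
  exact convex_halfSpace_le (innerSL ℝ (q - p)).isBoundedLinearMap.toIsLinearMap _

lemma notMem_thickening_setOf_dist_le_dist {X : Type*} [PseudoMetricSpace X] {p q : X}
    (hδ : 2 * δ ≤ dist p q) : q ∉ thickening δ {z | dist z p ≤ dist z q} := by
  intro hq
  obtain ⟨x, hx, hqx⟩ := mem_thickening_iff.1 hq
  have hxpq : dist x p ≤ dist x q := hx
  linarith [dist_triangle_left p q x, dist_comm q x]

lemma dist_le_exp_mul_dist_of_dist_le_dist (hV : Convex ℝ V) (hδ : 0 < δ)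
    (hpq : 2 * δ ≤ dist p q) (hg : DifferentiableOn ℂ g (thickening δ V))
    (hinj : InjOn g (thickening δ V)) (hp : p ∈ V) (hq : q ∈ V) (hz : z ∈ V)
    (hzpq : dist z p ≤ dist z q) :
    dist (g z) (g q) ≤ Real.exp (96 * Real.pi / δ * dist z p) * dist (g p) (g q) := by
  set W := V ∩ {x | dist x p ≤ dist x q}
  have hWV : thickening δ W ⊆ thickening δ V := thickening_subset_of_subset δ inter_subset_left
  have homit : g q ∉ g '' thickening δ W := by
    rw [hinj.mem_image_iff hWV (self_subset_thickening hδ V hq)]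
    exact fun h => notMem_thickening_setOf_dist_le_dist hpq
      (thickening_subset_of_subset δ inter_subset_right h)
  exact dist_le_exp_mul_dist_of_omitted (hV.inter (convex_setOf_dist_le_dist p q)) hδ
    (hg.mono hWV) (hinj.mono hWV) homit ⟨hp, by simp⟩ ⟨hz, hzpq⟩

lemma dist_le_exp_diam_add_one_mul_dist (hV : Convex ℝ V) (hb : Bornology.IsBounded V)
    (hδ : 0 < δ) (hpq : 2 * δ ≤ dist p q) (hg : DifferentiableOn ℂ g (thickening δ V))
    (hinj : InjOn g (thickening δ V)) (hp : p ∈ V) (hq : q ∈ V) (hz : z ∈ V) :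
    dist (g z) (g p) ≤ (Real.exp (96 * Real.pi / δ * diam V) + 1) * dist (g p) (g q) := by
  have hexp : ∀ x ∈ V, Real.exp (96 * Real.pi / δ * dist z x) * dist (g p) (g q) ≤
      Real.exp (96 * Real.pi / δ * diam V) * dist (g p) (g q) := fun x hx => by
    have := dist_le_diam_of_mem hb hz hx
    gcongr
  rw [add_one_mul]
  obtain hle | hle := le_total (dist z p) (dist z q)
  · have := dist_le_exp_mul_dist_of_dist_le_dist hV hδ hpq hg hinj hp hq hz hle
    linarith [hexp p hp, dist_triangle_right (g z) (g p) (g q)]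
  · have := dist_le_exp_mul_dist_of_dist_le_dist hV hδ (by rwa [dist_comm]) hg hinj hq hp hz hle
    rw [dist_comm (g q)] at this
    linarith [hexp q hq, dist_nonneg (x := g p) (y := g q)]

end OmittedValue

section Stadium

lemma realSeg_nonempty : realSeg.Nonempty := (nonempty_Icc.2 (by norm_num)).image _

lemma stadium_eq_thickening (a : ℝ) : stadium a = thickening a realSeg :=
  ext fun _ => (mem_thickening_iff_infDist_lt realSeg_nonempty).symm

lemma convex_stadium (a : ℝ) : Convex ℝ (stadium a) := by
  rw [stadium_eq_thickening]
  exact ((convex_Icc (-1 : ℝ) 1).linear_image ofRealCLM.toLinearMap).thickening a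

lemma isBounded_stadium (a : ℝ) : Bornology.IsBounded (stadium a) := by
  rw [stadium_eq_thickening]
  exact (isCompact_Icc.image continuous_ofReal).isBounded.thickening

lemma ofReal_mem_stadium {a x : ℝ} (ha : 0 < a) (hx : x ∈ Icc (-1) 1) : (x : ℂ) ∈ stadium a := by
  rw [stadium_eq_thickening]
  exact self_subset_thickening ha _ (mem_image_of_mem _ hx)

lemma thickening_stadium {a δ : ℝ} (hδ : 0 < δ) (ha : 0 < a) :
    thickening δ (stadium a) = stadium (δ + a) := by
  simp only [stadium_eq_thickening, thickening_thickening hδ ha]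

end Stadium

theorem stmt7_general {V : Set ℂ} (hV : Convex ℝ V) (hb : Bornology.IsBounded V) {p q : ℂ}
    (hp : p ∈ V) (hq : q ∈ V) (hpq : p ≠ q) {δ : ℝ} (hδ : 0 < δ) :
    ∃ C : ℝ, 0 < C ∧
      ∀ g : ℂ → ℂ,
        DifferentiableOn ℂ g (thickening δ V) → InjOn g (thickening δ V) →
        g p = p → g q = q →
        ∀ z ∈ V, ‖g z - z‖ ≤ C := by
  have hdist : 0 < dist p q := dist_pos.2 hpq
  set η := min δ (dist p q / 2)
  have hη : 0 < η := lt_min hδ (half_pos hdist)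
  have hηpq : 2 * η ≤ dist p q := by linarith [min_le_right δ (dist p q / 2)]
  have hsub : thickening η V ⊆ thickening δ V := thickening_mono (min_le_left _ _) V
  refine ⟨(Real.exp (96 * Real.pi / η * diam V) + 1) * dist p q + diam V,
    add_pos_of_pos_of_nonneg (by positivity) diam_nonneg, fun g hg hinj hgp hgq z hz => ?_⟩
  have hgz := dist_le_exp_diam_add_one_mul_dist hV hb hη hηpq (hg.mono hsub) (hinj.mono hsub)
    hp hq hz
  rw [hgp, hgq] at hgz
  rw [← dist_eq_norm]
  exact (dist_triangle_right _ _ p).trans (add_le_add hgz (dist_le_diam_of_mem hb hz hp))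

/-- **Uniform bound for univalent maps fixing `±1` (Montel).**
For `0 < ε < ε₁` there is `C > 0` such that every injective holomorphic map
`g : D_{ε₁} → ℂ` with `g(-1) = -1` and `g(1) = 1` satisfies `|g(z) - z| ≤ C` on `D_ε`. -/
theorem stmt7 (ε ε₁ : ℝ) (hε : 0 < ε) (hεε₁ : ε < ε₁) :
    ∃ C : ℝ, 0 < C ∧
      ∀ g : ℂ → ℂ,
        DifferentiableOn ℂ g (stadium ε₁) → Set.InjOn g (stadium ε₁) →
        g (-1) = -1 → g 1 = 1 →
        ∀ z ∈ stadium ε, ‖g z - z‖ ≤ C := by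
  have h := stmt7_general (convex_stadium ε) (isBounded_stadium ε)
    (ofReal_mem_stadium hε (x := -1) (by simp)) (ofReal_mem_stadium hε (x := 1) (by simp))
    (by norm_num) (sub_pos.2 hεε₁)
  simpa [thickening_stadium (sub_pos.2 hεε₁) hε] using h
end
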